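/- arXiv:2110.09921 — 3 statements merged into one kernel-verified Lean document; each statement's English description precedes it below -/
import Mathlib

section
/- For any deduction in I of a formula A from undischarged assumptions Γ, there is a deduction in I of A from undischarged assumptions among Γ that has the subformula property. -/
set_option autoImplicit false

/-- Formulas of intuitionistic propositional logic: atomic formulas (indexed by
natural numbers), `⊥` (`falsum`), conjunction, disjunction and implication.
Following the paper, `⊥` is a (nullary) connective and not an atomic formula. -/
inductive Formula : Type
  | atom : ℕ → Formula
  | falsum : Formula
  | and : Formula → Formula → Formula
  | or : Formula → Formula → Formula
  | imp : Formula → Formula → Formula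
  deriving DecidableEq

/-- Deductions in Negri and von Plato's system **I** of intuitionistic
propositional logic with general introduction and elimination rules, indexed by
their conclusion.  Each constructor corresponds to a rule of the system:

* `ass A` : the one-formula deduction of `A` from the open assumption `A`;
* `andI d₁ d₂ d₃` : from deductions `d₁` of `A`, `d₂` of `B` (the specific
  premises) and a deduction `d₃` of `C` (the arbitrary premise) in which
  assumptions of the form `A ∧ B` may be discharged, infer `C`;
* `impI A d₁ d₂` : from a deduction `d₁` of `B` in which assumptions `A` may be
  discharged and a deduction `d₂` of `C` in which assumptions `A ⊃ B` may be
  discharged, infer `C`;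
* `orI₁ B d₁ d₂` / `orI₂ A d₁ d₂` : from a deduction of `A` (respectively of
  `B`) and a deduction of `C` in which assumptions `A ∨ B` may be discharged,
  infer `C`;
* `andE d₁ d₂` : from a deduction of the major premise `A ∧ B` and a deduction
  of `C` in which assumptions `A` and `B` may be discharged, infer `C`;
* `impE d₁ d₂ d₃` : from a deduction of the major premise `A ⊃ B`, a deduction
  of the minor premise `A`, and a deduction of `C` in which assumptions `B`
  may be discharged, infer `C`;
* `orE d₁ d₂ d₃` : from a deduction of the major premise `A ∨ B` and two
  deductions of `C` in which assumptions `A`, respectively `B`, may be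
  discharged, infer `C`;
* `falsumE d` : from a deduction of `⊥` infer any `C`.

Discharge is recorded by the function `hyps` below: a rule application
discharges all open occurrences of the indicated formulas in the indicated
subdeductions. -/
inductive Ded : Formula → Type
  | ass (A : Formula) : Ded A
  | andI {A B C : Formula} (d₁ : Ded A) (d₂ : Ded B) (d₃ : Ded C) : Ded C
  | impI (A : Formula) {B C : Formula} (d₁ : Ded B) (d₂ : Ded C) : Ded C
  | orI₁ {A : Formula} (B : Formula) {C : Formula} (d₁ : Ded A) (d₂ : Ded C) : Ded C
  | orI₂ (A : Formula) {B C : Formula} (d₁ : Ded B) (d₂ : Ded C) : Ded C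
  | andE {A B C : Formula} (d₁ : Ded (Formula.and A B)) (d₂ : Ded C) : Ded C
  | impE {A B C : Formula} (d₁ : Ded (Formula.imp A B)) (d₂ : Ded A) (d₃ : Ded C) : Ded C
  | orE {A B C : Formula} (d₁ : Ded (Formula.or A B)) (d₂ : Ded C) (d₃ : Ded C) : Ded C
  | falsumE {C : Formula} (d : Ded Formula.falsum) : Ded C

/-- The set of undischarged (open) assumptions of a deduction. -/
def hyps : ∀ {C : Formula}, Ded C → Set Formula
  | _, .ass A => {A}
  | _, @Ded.andI A B _ d₁ d₂ d₃ => hyps d₁ ∪ hyps d₂ ∪ (hyps d₃ \ {Formula.and A B})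
  | _, @Ded.impI A B _ d₁ d₂ => (hyps d₁ \ {A}) ∪ (hyps d₂ \ {Formula.imp A B})
  | _, @Ded.orI₁ A B _ d₁ d₂ => hyps d₁ ∪ (hyps d₂ \ {Formula.or A B})
  | _, @Ded.orI₂ A B _ d₁ d₂ => hyps d₁ ∪ (hyps d₂ \ {Formula.or A B})
  | _, @Ded.andE A B _ d₁ d₂ => hyps d₁ ∪ (hyps d₂ \ {A, B})
  | _, @Ded.impE _ B _ d₁ d₂ d₃ => hyps d₁ ∪ hyps d₂ ∪ (hyps d₃ \ {B})
  | _, @Ded.orE A B _ d₁ d₂ d₃ => hyps d₁ ∪ (hyps d₂ \ {A}) ∪ (hyps d₃ \ {B})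
  | _, .falsumE d => hyps d
/-- The set of all formulas occurring in a deduction: the formula at every node
of the deduction tree (assumptions, premises and conclusions of all rule
applications). -/
def formulas : ∀ {C : Formula}, Ded C → Set Formula
  | _, .ass A => {A}
  | C, .andI d₁ d₂ d₃ => insert C (formulas d₁ ∪ formulas d₂ ∪ formulas d₃)
  | C, .impI _ d₁ d₂ => insert C (formulas d₁ ∪ formulas d₂)
  | C, .orI₁ _ d₁ d₂ => insert C (formulas d₁ ∪ formulas d₂)
  | C, .orI₂ _ d₁ d₂ => insert C (formulas d₁ ∪ formulas d₂)
  | C, .andE d₁ d₂ => insert C (formulas d₁ ∪ formulas d₂)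
  | C, .impE d₁ d₂ d₃ => insert C (formulas d₁ ∪ formulas d₂ ∪ formulas d₃)
  | C, .orE d₁ d₂ d₃ => insert C (formulas d₁ ∪ formulas d₂ ∪ formulas d₃)
  | C, .falsumE d => insert C (formulas d)

/-- `Subformula F A` : `F` is a subformula of `A`. -/
inductive Subformula : Formula → Formula → Prop
  | refl (A : Formula) : Subformula A A
  | and_left {F A B : Formula} : Subformula F A → Subformula F (Formula.and A B)
  | and_right {F A B : Formula} : Subformula F B → Subformula F (Formula.and A B)
  | or_left {F A B : Formula} : Subformula F A → Subformula F (Formula.or A B)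
  | or_right {F A B : Formula} : Subformula F B → Subformula F (Formula.or A B)
  | imp_left {F A B : Formula} : Subformula F A → Subformula F (Formula.imp A B)
  | imp_right {F A B : Formula} : Subformula F B → Subformula F (Formula.imp A B)

/-- A deduction of a conclusion `C` has the subformula property if every
formula occurring in it is a subformula of `C` or of one of its undischarged
assumptions. -/
def HasSubformulaProperty {C : Formula} (d : Ded C) : Prop :=
  ∀ F ∈ formulas d, Subformula F C ∨ ∃ H ∈ hyps d, Subformula F H

/-!
Fix a set `S` of formulas closed under subformulas and consider the Kripke model whose worlds are
the subsets of `S` that are maximal among those not deriving some `D ∈ S` by a deduction staying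
inside `S`. In a world, forcing and membership agree on `S`. No cut is needed for this: the rules
of I have an arbitrary conclusion, so when a rule discharges a formula missing from the world, its
premise can be the deduction of `D` provided by maximality. By soundness, a formula of `S` that is
deducible in I from assumptions in `S` is deducible from them inside `S`.

Taking for `S` the subformulas of the conclusion and the assumptions of `d` does not quite suffice,
because the new deduction may use fewer assumptions than `d` and so have fewer formulas allowed.
Starting from a deduction whose set of open assumptions is minimal excludes this.
-/

theorem Subformula.trans {F A B : Formula} (hFA : Subformula F A) (hAB : Subformula A B) :
    Subformula F B := by
  induction hAB with
  | refl => exact hFA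
  | and_left _ ih => exact .and_left ih
  | and_right _ ih => exact .and_right ih
  | or_left _ ih => exact .or_left ih
  | or_right _ ih => exact .or_right ih
  | imp_left _ ih => exact .imp_left ih
  | imp_right _ ih => exact .imp_right ih

/-- Sets of formulas closed under subformulas; these delimit the formulas a deduction may use. -/
def SubformulaClosed (S : Set Formula) : Prop :=
  ∀ ⦃F A : Formula⦄, Subformula F A → A ∈ S → F ∈ S

namespace SubformulaClosed

variable {S : Set Formula} {A B : Formula}

theorem and_mem (hS : SubformulaClosed S) (h : A.and B ∈ S) : A ∈ S ∧ B ∈ S :=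
  ⟨hS (.and_left (.refl A)) h, hS (.and_right (.refl B)) h⟩

theorem or_mem (hS : SubformulaClosed S) (h : A.or B ∈ S) : A ∈ S ∧ B ∈ S :=
  ⟨hS (.or_left (.refl A)) h, hS (.or_right (.refl B)) h⟩

theorem imp_mem (hS : SubformulaClosed S) (h : A.imp B ∈ S) : A ∈ S ∧ B ∈ S :=
  ⟨hS (.imp_left (.refl A)) h, hS (.imp_right (.refl B)) h⟩

end SubformulaClosed

/-- The subformula closure of a set of formulas; it bounds the formulas that the subformula
property allows in a deduction. -/
def subformulas (Γ : Set Formula) : Set Formula :=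
  {F | ∃ H ∈ Γ, Subformula F H}

theorem subset_subformulas (Γ : Set Formula) : Γ ⊆ subformulas Γ :=
  fun H hH => ⟨H, hH, .refl H⟩

theorem subformulaClosed_subformulas (Γ : Set Formula) : SubformulaClosed (subformulas Γ) :=
  fun _ _ hFA ⟨H, hH, hAH⟩ => ⟨H, hH, hFA.trans hAH⟩

theorem hasSubformulaProperty_iff {C : Formula} {d : Ded C} :
    HasSubformulaProperty d ↔ formulas d ⊆ subformulas (insert C (hyps d)) :=
  forall₂_congr fun _ _ => Set.exists_mem_insert.symm

theorem conclusion_mem_formulas {C : Formula} (d : Ded C) : C ∈ formulas d := by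
  cases d with
  | ass => exact Set.mem_singleton C
  | _ => exact Set.mem_insert C _

theorem finite_hyps {C : Formula} (d : Ded C) : (hyps d).Finite := by
  induction d with
  | ass A => exact Set.finite_singleton A
  | andI _ _ _ h₁ h₂ h₃ => exact (h₁.union h₂).union h₃.sdiff
  | impI _ _ _ h₁ h₂ => exact h₁.sdiff.union h₂.sdiff
  | orI₁ _ _ _ h₁ h₂ => exact h₁.union h₂.sdiff
  | orI₂ _ _ _ h₁ h₂ => exact h₁.union h₂.sdiff
  | andE _ _ h₁ h₂ => exact h₁.union h₂.sdiff
  | impE _ _ _ h₁ h₂ h₃ => exact (h₁.union h₂).union h₃.sdiff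
  | orE _ _ _ h₁ h₂ h₃ => exact (h₁.union h₂.sdiff).union h₃.sdiff
  | falsumE _ h => exact h

theorem exists_minimal_hyps {C : Formula} (d : Ded C) :
    ∃ d₀ : Ded C, hyps d₀ ⊆ hyps d ∧ ∀ d' : Ded C, hyps d' ⊆ hyps d₀ → hyps d' = hyps d₀ := by
  have hfin : (𝒫 hyps d ∩ Set.range (hyps : Ded C → Set Formula)).Finite :=
    (finite_hyps d).powerset.inter_of_left _
  obtain ⟨_, -, ⟨hd₀, d₀, rfl⟩, hmin⟩ :=
    hfin.exists_le_minimal (a := hyps d) ⟨Set.mem_powerset subset_rfl, d, rfl⟩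
  exact ⟨d₀, hd₀, fun d' hd' => hd'.antisymm (hmin ⟨hd'.trans hd₀, d', rfl⟩ hd')⟩

/-- Kripke forcing over a preorder `W`, where the atoms are interpreted by a family of upper
sets so that forcing is persistent. -/
def Forces {W : Type*} [Preorder W] (v : ℕ → UpperSet W) (w : W) : Formula → Prop
  | .atom n => w ∈ v n
  | .falsum => False
  | .and A B => Forces v w A ∧ Forces v w B
  | .or A B => Forces v w A ∨ Forces v w B
  | .imp A B => ∀ w' ≥ w, Forces v w' A → Forces v w' B

theorem subset_of_sdiff_subset {α : Type*} {s t u : Set α} (hst : s \ t ⊆ u) (ht : t ⊆ u) :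
    s ⊆ u :=
  (Set.sdiff_subset_iff.1 hst).trans (Set.union_subset ht subset_rfl)

section Kripke

variable {W : Type*} [Preorder W] {v : ℕ → UpperSet W} {w w' : W}

theorem Forces.mono {A : Formula} (hw : w ≤ w') (h : Forces v w A) : Forces v w' A := by
  induction A with
  | atom n => exact (v n).upper hw h
  | falsum => exact h
  | and A B ihA ihB => exact ⟨ihA h.1, ihB h.2⟩
  | or A B ihA ihB => exact h.imp ihA ihB
  | imp A B => exact fun u hu => h u (hw.trans hu)

theorem forces_of_hyps_subset {C : Formula} (d : Ded C) (h : hyps d ⊆ {H | Forces v w H}) :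
    Forces v w C := by
  induction d generalizing w with
  | ass A => exact h rfl
  | @andI A B C _ _ _ ihA ihB ihC =>
    obtain ⟨⟨hA, hB⟩, hC⟩ := (Set.union_subset_iff.1 h).imp_left Set.union_subset_iff.1
    have hAB : Forces v w (A.and B) := ⟨ihA hA, ihB hB⟩
    exact ihC (subset_of_sdiff_subset hC (Set.singleton_subset_iff.2 hAB))
  | @impI A B C _ _ ihB ihC =>
    obtain ⟨hB, hC⟩ := Set.union_subset_iff.1 h
    have hAB : Forces v w (A.imp B) := fun w' hw hA =>
      ihB (subset_of_sdiff_subset (hB.trans fun _ => .mono hw) (Set.singleton_subset_iff.2 hA))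
    exact ihC (subset_of_sdiff_subset hC (Set.singleton_subset_iff.2 hAB))
  | @orI₁ A B C _ _ ihA ihC =>
    obtain ⟨hA, hC⟩ := Set.union_subset_iff.1 h
    have hAB : Forces v w (A.or B) := .inl (ihA hA)
    exact ihC (subset_of_sdiff_subset hC (Set.singleton_subset_iff.2 hAB))
  | @orI₂ A B C _ _ ihB ihC =>
    obtain ⟨hB, hC⟩ := Set.union_subset_iff.1 h
    have hAB : Forces v w (A.or B) := .inr (ihB hB)
    exact ihC (subset_of_sdiff_subset hC (Set.singleton_subset_iff.2 hAB))
  | @andE A B C _ _ ihAB ihC =>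
    obtain ⟨hAB, hC⟩ := Set.union_subset_iff.1 h
    obtain ⟨hA, hB⟩ : Forces v w (A.and B) := ihAB hAB
    exact ihC (subset_of_sdiff_subset hC (Set.pair_subset hA hB))
  | @impE A B C _ _ _ ihAB ihA ihC =>
    obtain ⟨⟨hAB, hA⟩, hC⟩ := (Set.union_subset_iff.1 h).imp_left Set.union_subset_iff.1
    have hB : Forces v w B := ihAB hAB w le_rfl (ihA hA)
    exact ihC (subset_of_sdiff_subset hC (Set.singleton_subset_iff.2 hB))
  | @orE A B C _ _ _ ihAB ihC₁ ihC₂ =>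
    obtain ⟨⟨hAB, hC₁⟩, hC₂⟩ := (Set.union_subset_iff.1 h).imp_left Set.union_subset_iff.1
    obtain hA | hB : Forces v w (A.or B) := ihAB hAB
    · exact ihC₁ (subset_of_sdiff_subset hC₁ (Set.singleton_subset_iff.2 hA))
    · exact ihC₂ (subset_of_sdiff_subset hC₂ (Set.singleton_subset_iff.2 hB))
  | falsumE _ ih => exact (ih h).elim

end Kripke

/-- Derivability of `C` from assumptions among `Γ` by a deduction in I all of whose formulas
lie in `S`. -/
def DerivableWithin (S Γ : Set Formula) (C : Formula) : Prop :=
  ∃ d : Ded C, hyps d ⊆ Γ ∧ formulas d ⊆ S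

namespace DerivableWithin

variable {S Γ Δ : Set Formula} {A B C : Formula}

theorem mono (hΓ : Γ ⊆ Δ) : DerivableWithin S Γ C → DerivableWithin S Δ C
  | ⟨d, h, f⟩ => ⟨d, h.trans hΓ, f⟩

theorem ass (hS : A ∈ S) (hΓ : A ∈ Γ) : DerivableWithin S Γ A :=
  ⟨.ass A, Set.singleton_subset_iff.2 hΓ, Set.singleton_subset_iff.2 hS⟩

theorem andI : DerivableWithin S Γ A → DerivableWithin S Γ B →
    DerivableWithin S (insert (A.and B) Γ) C → DerivableWithin S Γ C
  | ⟨d₁, h₁, f₁⟩, ⟨d₂, h₂, f₂⟩, ⟨d₃, h₃, f₃⟩ =>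
    ⟨.andI d₁ d₂ d₃,
      Set.union_subset (Set.union_subset h₁ h₂) (Set.sdiff_singleton_subset_iff.2 h₃),
      Set.insert_subset (f₃ (conclusion_mem_formulas d₃))
        (Set.union_subset (Set.union_subset f₁ f₂) f₃)⟩

theorem impI : DerivableWithin S (insert A Γ) B →
    DerivableWithin S (insert (A.imp B) Γ) C → DerivableWithin S Γ C
  | ⟨d₁, h₁, f₁⟩, ⟨d₂, h₂, f₂⟩ =>
    ⟨.impI A d₁ d₂,
      Set.union_subset (Set.sdiff_singleton_subset_iff.2 h₁) (Set.sdiff_singleton_subset_iff.2 h₂),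
      Set.insert_subset (f₂ (conclusion_mem_formulas d₂)) (Set.union_subset f₁ f₂)⟩

theorem orI₁ : DerivableWithin S Γ A →
    DerivableWithin S (insert (A.or B) Γ) C → DerivableWithin S Γ C
  | ⟨d₁, h₁, f₁⟩, ⟨d₂, h₂, f₂⟩ =>
    ⟨.orI₁ B d₁ d₂,
      Set.union_subset h₁ (Set.sdiff_singleton_subset_iff.2 h₂),
      Set.insert_subset (f₂ (conclusion_mem_formulas d₂)) (Set.union_subset f₁ f₂)⟩

theorem orI₂ : DerivableWithin S Γ B →
    DerivableWithin S (insert (A.or B) Γ) C → DerivableWithin S Γ C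
  | ⟨d₁, h₁, f₁⟩, ⟨d₂, h₂, f₂⟩ =>
    ⟨.orI₂ A d₁ d₂,
      Set.union_subset h₁ (Set.sdiff_singleton_subset_iff.2 h₂),
      Set.insert_subset (f₂ (conclusion_mem_formulas d₂)) (Set.union_subset f₁ f₂)⟩

theorem andE : DerivableWithin S Γ (A.and B) →
    DerivableWithin S (insert A (insert B Γ)) C → DerivableWithin S Γ C
  | ⟨d₁, h₁, f₁⟩, ⟨d₂, h₂, f₂⟩ =>
    ⟨.andE d₁ d₂,
      Set.union_subset h₁ (Set.sdiff_subset_iff.2 (by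
        rwa [Set.insert_union, Set.singleton_union])),
      Set.insert_subset (f₂ (conclusion_mem_formulas d₂)) (Set.union_subset f₁ f₂)⟩

theorem impE : DerivableWithin S Γ (A.imp B) → DerivableWithin S Γ A →
    DerivableWithin S (insert B Γ) C → DerivableWithin S Γ C
  | ⟨d₁, h₁, f₁⟩, ⟨d₂, h₂, f₂⟩, ⟨d₃, h₃, f₃⟩ =>
    ⟨.impE d₁ d₂ d₃,
      Set.union_subset (Set.union_subset h₁ h₂) (Set.sdiff_singleton_subset_iff.2 h₃),
      Set.insert_subset (f₃ (conclusion_mem_formulas d₃))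
        (Set.union_subset (Set.union_subset f₁ f₂) f₃)⟩

theorem orE : DerivableWithin S Γ (A.or B) → DerivableWithin S (insert A Γ) C →
    DerivableWithin S (insert B Γ) C → DerivableWithin S Γ C
  | ⟨d₁, h₁, f₁⟩, ⟨d₂, h₂, f₂⟩, ⟨d₃, h₃, f₃⟩ =>
    ⟨.orE d₁ d₂ d₃,
      Set.union_subset (Set.union_subset h₁ (Set.sdiff_singleton_subset_iff.2 h₂))
        (Set.sdiff_singleton_subset_iff.2 h₃),
      Set.insert_subset (f₃ (conclusion_mem_formulas d₃))
        (Set.union_subset (Set.union_subset f₁ f₂) f₃)⟩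

theorem falsumE (hC : C ∈ S) : DerivableWithin S Γ .falsum → DerivableWithin S Γ C
  | ⟨d, h, f⟩ => ⟨.falsumE d, h, Set.insert_subset hC f⟩

theorem exists_mem_of_sUnion {c : Set (Set Formula)} (hne : c.Nonempty)
    (hc : DirectedOn (· ⊆ ·) c) : DerivableWithin S (⋃₀ c) C → ∃ Γ ∈ c, DerivableWithin S Γ C
  | ⟨d, h, f⟩ =>
    have ⟨Γ, hΓ, hdΓ⟩ :=
      hc.exists_mem_subset_of_finite_of_subset_sUnion hne (finite_hyps d) h
    ⟨Γ, hΓ, d, hdΓ, f⟩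

end DerivableWithin

/-- The worlds of the canonical Kripke model of derivability within `S`: subsets of `S` maximal
among those from which some fixed `D ∈ S` is not derivable within `S`. They are ordered by
inclusion. Maximality relative to a formula, rather than mere consistency, is what makes them
prime. -/
abbrev CanonicalWorld (S : Set Formula) : Type :=
  {Δ : Set Formula // ∃ D ∈ S, Maximal (fun Γ => Γ ⊆ S ∧ ¬ DerivableWithin S Γ D) Δ}

theorem exists_canonicalWorld {S Γ : Set Formula} {D : Formula} (hΓ : Γ ⊆ S) (hD : D ∈ S)
    (h : ¬ DerivableWithin S Γ D) : ∃ Δ : CanonicalWorld S, Γ ⊆ Δ.1 ∧ D ∉ Δ.1 := by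
  obtain ⟨Δ, hΓΔ, hΔ⟩ :=
    zorn_subset_nonempty {Γ | Γ ⊆ S ∧ ¬ DerivableWithin S Γ D} (fun c hc hchain hne => by
      refine ⟨⋃₀ c, ⟨Set.sUnion_subset fun Γ hΓ => (hc hΓ).1, fun hder => ?_⟩,
        fun _ => Set.subset_sUnion_of_mem⟩
      obtain ⟨Γ, hΓ, hder⟩ := hder.exists_mem_of_sUnion hne hchain.directedOn
      exact (hc hΓ).2 hder) Γ ⟨hΓ, h⟩
  exact ⟨⟨Δ, D, hD, hΔ⟩, hΓΔ, fun hDΔ => hΔ.prop.2 (.ass hD hDΔ)⟩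

namespace CanonicalWorld

variable {S : Set Formula} {A B : Formula}

theorem exists_not_derivableWithin (Δ : CanonicalWorld S) :
    ∃ D ∈ S, ¬ DerivableWithin S Δ.1 D ∧
      ∀ A ∈ S, A ∉ Δ.1 → DerivableWithin S (insert A Δ.1) D := by
  obtain ⟨Δ, D, hD, hΔ⟩ := Δ
  refine ⟨D, hD, hΔ.prop.2, fun A hA hAΔ => ?_⟩
  by_contra h
  exact hAΔ (hΔ.mem_of_prop_insert ⟨Set.insert_subset hA hΔ.prop.1, h⟩)

theorem mem_of_forall_derivableWithin (Δ : CanonicalWorld S) (hA : A ∈ S)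
    (h : ∀ C, DerivableWithin S (insert A Δ.1) C → DerivableWithin S Δ.1 C) : A ∈ Δ.1 := by
  obtain ⟨D, -, hD, hmax⟩ := Δ.exists_not_derivableWithin
  by_contra hAΔ
  exact hD (h D (hmax A hA hAΔ))

theorem falsum_notMem (Δ : CanonicalWorld S) (hS : .falsum ∈ S) : .falsum ∉ Δ.1 := by
  obtain ⟨D, hDS, hD, -⟩ := Δ.exists_not_derivableWithin
  exact fun h => hD (.falsumE hDS (.ass hS h))

theorem and_mem_iff (Δ : CanonicalWorld S) (hS : SubformulaClosed S) (hAB : A.and B ∈ S) :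
    A.and B ∈ Δ.1 ↔ A ∈ Δ.1 ∧ B ∈ Δ.1 := by
  obtain ⟨hA, hB⟩ := hS.and_mem hAB
  refine ⟨fun h => ⟨?_, ?_⟩, fun ⟨hAΔ, hBΔ⟩ => ?_⟩
  · exact Δ.mem_of_forall_derivableWithin hA fun C hC =>
      .andE (.ass hAB h) (hC.mono (Set.insert_subset_insert (Set.subset_insert _ _)))
  · exact Δ.mem_of_forall_derivableWithin hB fun C hC =>
      .andE (.ass hAB h) (hC.mono (Set.subset_insert _ _))
  · exact Δ.mem_of_forall_derivableWithin hAB fun C hC =>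
      .andI (.ass hA hAΔ) (.ass hB hBΔ) hC

theorem or_mem_iff (Δ : CanonicalWorld S) (hS : SubformulaClosed S) (hAB : A.or B ∈ S) :
    A.or B ∈ Δ.1 ↔ A ∈ Δ.1 ∨ B ∈ Δ.1 := by
  obtain ⟨hA, hB⟩ := hS.or_mem hAB
  refine ⟨fun h => ?_, ?_⟩
  · obtain ⟨D, -, hD, hmax⟩ := Δ.exists_not_derivableWithin
    by_contra! ⟨hAΔ, hBΔ⟩
    exact hD (.orE (.ass hAB h) (hmax A hA hAΔ) (hmax B hB hBΔ))
  · rintro (hAΔ | hBΔ)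
    · exact Δ.mem_of_forall_derivableWithin hAB fun C hC => .orI₁ (.ass hA hAΔ) hC
    · exact Δ.mem_of_forall_derivableWithin hAB fun C hC => .orI₂ (.ass hB hBΔ) hC

theorem imp_mem_iff (Δ : CanonicalWorld S) (hS : SubformulaClosed S) (hAB : A.imp B ∈ S) :
    A.imp B ∈ Δ.1 ↔ ∀ Δ' ≥ Δ, A ∈ Δ'.1 → B ∈ Δ'.1 := by
  obtain ⟨hA, hB⟩ := hS.imp_mem hAB
  refine ⟨fun h Δ' hle hAΔ' => ?_, fun h => ?_⟩
  · exact Δ'.mem_of_forall_derivableWithin hB fun C hC =>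
      .impE (.ass hAB (hle h)) (.ass hA hAΔ') hC
  · have hder : DerivableWithin S (insert A Δ.1) B := by
      by_contra hnot
      obtain ⟨_, _, hΔ⟩ := Δ.2
      obtain ⟨Δ', hsub, hBΔ'⟩ :=
        exists_canonicalWorld (Set.insert_subset hA hΔ.prop.1) hB hnot
      exact hBΔ' (h Δ' ((Set.subset_insert _ _).trans hsub) (hsub (Set.mem_insert _ _)))
    exact Δ.mem_of_forall_derivableWithin hAB fun C hC => .impI hder hC

/-- The valuation of the canonical model: an atom holds at the worlds containing it. -/
def valuation (S : Set Formula) (n : ℕ) : UpperSet (CanonicalWorld S) where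
  carrier := {Δ | .atom n ∈ Δ.1}
  upper' _ _ hle h := hle h

theorem forces_iff_mem (hS : SubformulaClosed S) (hA : A ∈ S) (Δ : CanonicalWorld S) :
    Forces (valuation S) Δ A ↔ A ∈ Δ.1 := by
  induction A generalizing Δ with
  | atom n => exact Iff.rfl
  | falsum => exact iff_of_false id (Δ.falsum_notMem hA)
  | and A B ihA ihB =>
    obtain ⟨hAS, hBS⟩ := hS.and_mem hA
    rw [Δ.and_mem_iff hS hA, ← ihA hAS, ← ihB hBS, Forces]
  | or A B ihA ihB =>
    obtain ⟨hAS, hBS⟩ := hS.or_mem hA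
    rw [Δ.or_mem_iff hS hA, ← ihA hAS, ← ihB hBS, Forces]
  | imp A B ihA ihB =>
    obtain ⟨hAS, hBS⟩ := hS.imp_mem hA
    simp only [Δ.imp_mem_iff hS hA, ← ihA hAS, ← ihB hBS, Forces]

end CanonicalWorld

theorem derivableWithin_hyps {S : Set Formula} {C : Formula} {d : Ded C}
    (hS : SubformulaClosed S) (hC : C ∈ S) (hd : hyps d ⊆ S) : DerivableWithin S (hyps d) C := by
  by_contra hnot
  obtain ⟨Δ, hdΔ, hCΔ⟩ := exists_canonicalWorld hd hC hnot
  have hforces : Forces (CanonicalWorld.valuation S) Δ C := forces_of_hyps_subset d fun H hH =>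
    (CanonicalWorld.forces_iff_mem hS (hd hH) Δ).2 (hdΔ hH)
  exact hCΔ ((CanonicalWorld.forces_iff_mem hS hC Δ).1 hforces)

/-- **Corollary (subformula property)**: for any deduction in I of a formula
`A` from undischarged assumptions `Γ`, there is a deduction in I of `A` from
undischarged assumptions among `Γ` that has the subformula property. -/
theorem subformula_property (Γ : Set Formula) (A : Formula) (d : Ded A) (hd : hyps d ⊆ Γ) :
    ∃ d' : Ded A, hyps d' ⊆ Γ ∧ HasSubformulaProperty d' := by
  obtain ⟨d₀, hd₀, hmin⟩ := exists_minimal_hyps d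
  have hconcl : A ∈ subformulas (insert A (hyps d₀)) :=
    subset_subformulas _ (Set.mem_insert _ _)
  have hhyps : hyps d₀ ⊆ subformulas (insert A (hyps d₀)) :=
    (Set.subset_insert _ _).trans (subset_subformulas _)
  obtain ⟨d', hd', hf⟩ := derivableWithin_hyps (subformulaClosed_subformulas _) hconcl hhyps
  refine ⟨d', (hd'.trans hd₀).trans hd, hasSubformulaProperty_iff.2 ?_⟩
  rwa [hmin d' hd']
end

section
/- Any deduction in I can be transformed into a deduction of the same conclusion from the same undischarged assumptions in which every application of ⊥E has an atomic conclusion. -/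
set_option autoImplicit false

/-- An atomic formula is one that contains no connective (`⊥` counts as a
connective, not as an atomic formula). -/
def Formula.IsAtomic : Formula → Prop
  | .atom _ => True
  | _ => False

/-- `FalsumEAtomic d` : every application of `⊥E` in `d` has an atomic
conclusion. -/
def FalsumEAtomic : ∀ {C : Formula}, Ded C → Prop
  | _, .ass _ => True
  | _, .andI d₁ d₂ d₃ => FalsumEAtomic d₁ ∧ FalsumEAtomic d₂ ∧ FalsumEAtomic d₃
  | _, .impI _ d₁ d₂ => FalsumEAtomic d₁ ∧ FalsumEAtomic d₂
  | _, .orI₁ _ d₁ d₂ => FalsumEAtomic d₁ ∧ FalsumEAtomic d₂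
  | _, .orI₂ _ d₁ d₂ => FalsumEAtomic d₁ ∧ FalsumEAtomic d₂
  | _, .andE d₁ d₂ => FalsumEAtomic d₁ ∧ FalsumEAtomic d₂
  | _, .impE d₁ d₂ d₃ => FalsumEAtomic d₁ ∧ FalsumEAtomic d₂ ∧ FalsumEAtomic d₃
  | _, .orE d₁ d₂ d₃ => FalsumEAtomic d₁ ∧ FalsumEAtomic d₂ ∧ FalsumEAtomic d₃
  | C, .falsumE d => C.IsAtomic ∧ FalsumEAtomic d

/-!
Apply `⊥E` only to the assumption `⊥` and only with atomic conclusions, building up a compound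
formula `C` by introduction rules; this derives `C` from `⊥`. An arbitrary `⊥E` with premise
deduced by `d` then becomes a cut of `d` with that derivation. Grafting `d` onto the leaves `⊥`
instead would lose assumptions: a `⊃I` in that derivation may discharge open assumptions of `d`.
-/

namespace Ded

/-- The cut rule, derived as an introduction of `A ⊃ C` followed by its elimination. -/
def cut {A C : Formula} (d : Ded A) (e : Ded C) : Ded C :=
  impE (impI A e (ass (.imp A C))) d (ass C)

/-- The deduction of `C` from the assumption `⊥` in which `⊥E` has only atomic conclusions; a
disjunction is introduced from its left disjunct. -/
def exFalso : ∀ C : Formula, Ded C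
  | .atom _ => falsumE (ass .falsum)
  | .falsum => ass .falsum
  | .and A B => andI (exFalso A) (exFalso B) (ass (.and A B))
  | .or A B => orI₁ B (exFalso A) (ass (.or A B))
  | .imp A B => impI A (exFalso B) (ass (.imp A B))

/-- The transformation of deductions that replaces each `⊥E` by a cut with `exFalso`. -/
def atomizeFalsumE : ∀ {C : Formula}, Ded C → Ded C
  | _, ass A => ass A
  | _, andI d₁ d₂ d₃ => andI d₁.atomizeFalsumE d₂.atomizeFalsumE d₃.atomizeFalsumE
  | _, impI A d₁ d₂ => impI A d₁.atomizeFalsumE d₂.atomizeFalsumE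
  | _, orI₁ B d₁ d₂ => orI₁ B d₁.atomizeFalsumE d₂.atomizeFalsumE
  | _, orI₂ A d₁ d₂ => orI₂ A d₁.atomizeFalsumE d₂.atomizeFalsumE
  | _, andE d₁ d₂ => andE d₁.atomizeFalsumE d₂.atomizeFalsumE
  | _, impE d₁ d₂ d₃ => impE d₁.atomizeFalsumE d₂.atomizeFalsumE d₃.atomizeFalsumE
  | _, orE d₁ d₂ d₃ => orE d₁.atomizeFalsumE d₂.atomizeFalsumE d₃.atomizeFalsumE
  | C, falsumE d => cut d.atomizeFalsumE (exFalso C)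

theorem hyps_cut {A C : Formula} (d : Ded A) (e : Ded C) :
    hyps (cut d e) = hyps d ∪ (hyps e \ {A}) := by
  simp only [cut, hyps, Set.sdiff_self, Set.union_empty]
  exact Set.union_comm _ _

theorem falsumEAtomic_cut {A C : Formula} {d : Ded A} {e : Ded C} :
    FalsumEAtomic (cut d e) ↔ FalsumEAtomic d ∧ FalsumEAtomic e := by
  simp only [cut, FalsumEAtomic, and_true]
  exact and_comm

/-- Equality fails for `⊥ ⊃ B`, whose introduction discharges `⊥`. -/
theorem hyps_exFalso_subset (C : Formula) : hyps (exFalso C) ⊆ {.falsum} := by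
  induction C with
  | atom | falsum => exact subset_rfl
  | and A B ihA ihB =>
    simpa only [exFalso, hyps, Set.sdiff_self, Set.union_empty] using Set.union_subset ihA ihB
  | or A B ihA =>
    simpa only [exFalso, hyps, Set.sdiff_self, Set.union_empty] using ihA
  | imp A B _ ihB =>
    simpa only [exFalso, hyps, Set.sdiff_self, Set.union_empty] using Set.sdiff_subset.trans ihB

theorem falsumEAtomic_exFalso (C : Formula) : FalsumEAtomic (exFalso C) := by
  induction C <;> simp_all only [exFalso, FalsumEAtomic, Formula.IsAtomic, and_self]

theorem hyps_cut_exFalso (d : Ded .falsum) (C : Formula) : hyps (cut d (exFalso C)) = hyps d := by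
  rw [hyps_cut, Set.sdiff_eq_empty.mpr (hyps_exFalso_subset C), Set.union_empty]

theorem hyps_atomizeFalsumE {C : Formula} (d : Ded C) : hyps d.atomizeFalsumE = hyps d := by
  induction d <;> simp_all only [atomizeFalsumE, hyps, hyps_cut_exFalso]

theorem falsumEAtomic_atomizeFalsumE {C : Formula} (d : Ded C) :
    FalsumEAtomic d.atomizeFalsumE := by
  induction d <;>
    simp_all only [atomizeFalsumE, FalsumEAtomic, falsumEAtomic_cut, falsumEAtomic_exFalso,
      and_self]

end Ded

/-- **`⊥E` can be restricted to atomic conclusions**: any deduction in I can be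
transformed into a deduction of the same conclusion from the same undischarged
assumptions in which every application of `⊥E` has an atomic conclusion. -/
theorem falsumE_atomic_transformation {C : Formula} (d : Ded C) :
    ∃ d' : Ded C, hyps d' = hyps d ∧ FalsumEAtomic d' :=
  ⟨d.atomizeFalsumE, d.hyps_atomizeFalsumE, d.falsumEAtomic_atomizeFalsumE⟩
end

section
/- The system I is consistent: there is no proof of ⊥ in I, i.e. it is not the case that ⊢_I ⊥. -/
/-! Interpret formulas in a Heyting algebra. Each introduction rule of **I**, and likewise `andE`
and `impE`, is the usual natural deduction rule followed by a cut on the formulas discharged in the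
last premise; so soundness reduces to the usual rules and cut. In the Heyting algebra `Bool`, a
deduction of `⊥` without open assumptions would give `⊥ = ⊤`. -/

set_option autoImplicit false

section HeytingSemantics

variable {α : Type*} [HeytingAlgebra α]

/-- The value of a formula in a Heyting algebra under a valuation `v` of the atoms. -/
def Formula.eval (v : ℕ → α) : Formula → α
  | .atom n => v n
  | .falsum => ⊥
  | .and A B => A.eval v ⊓ B.eval v
  | .or A B => A.eval v ⊔ B.eval v
  | .imp A B => A.eval v ⇨ B.eval v

/-- Algebraic consequence under the valuation `v`: every lower bound of the values of `Γ` lies below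
the value of `C`. Lower bounds stand in for the infimum of these values, which need not exist since
`Γ` may be infinite. -/
def Entails (v : ℕ → α) (Γ : Set Formula) (C : Formula) : Prop :=
  ∀ a : α, (∀ X ∈ Γ, a ≤ X.eval v) → a ≤ C.eval v

namespace Entails

variable {v : ℕ → α} {A B C : Formula} {Γ Δ Θ : Set Formula}

theorem singleton_self : Entails v {A} A :=
  fun _ h => h A rfl

theorem cut_set (hΔ : ∀ X ∈ Δ, Entails v Γ X) (hC : Entails v Θ C) :
    Entails v (Γ ∪ Θ \ Δ) C := by
  refine fun a h => hC a fun X hX => ?_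
  by_cases hXΔ : X ∈ Δ
  · exact hΔ X hXΔ a fun Y hY => h Y (.inl hY)
  · exact h X (.inr ⟨hX, hXΔ⟩)

theorem cut (hA : Entails v Γ A) (hC : Entails v Δ C) : Entails v (Γ ∪ Δ \ {A}) C :=
  cut_set (by rintro _ rfl; exact hA) hC

theorem and_intro (hA : Entails v Γ A) (hB : Entails v Δ B) : Entails v (Γ ∪ Δ) (.and A B) :=
  fun a h => le_inf (hA a fun X hX => h X (.inl hX)) (hB a fun X hX => h X (.inr hX))

theorem and_left (h : Entails v Γ (.and A B)) : Entails v Γ A :=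
  fun a ha => (h a ha).trans inf_le_left

theorem and_right (h : Entails v Γ (.and A B)) : Entails v Γ B :=
  fun a ha => (h a ha).trans inf_le_right

theorem or_inl (h : Entails v Γ A) : Entails v Γ (.or A B) :=
  fun a ha => (h a ha).trans le_sup_left

theorem or_inr (h : Entails v Γ B) : Entails v Γ (.or A B) :=
  fun a ha => (h a ha).trans le_sup_right

theorem imp_intro (hB : Entails v Γ B) : Entails v (Γ \ {A}) (.imp A B) := by
  refine fun a h => le_himp_iff.2 (hB _ fun X hX => ?_)
  by_cases hXA : X = A
  · exact hXA ▸ inf_le_right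
  · exact inf_le_left.trans (h X ⟨hX, hXA⟩)

theorem imp_elim (hAB : Entails v Γ (.imp A B)) (hA : Entails v Δ A) : Entails v (Γ ∪ Δ) B :=
  fun a h => (le_inf (hAB a fun X hX => h X (.inl hX)) (hA a fun X hX => h X (.inr hX))).trans
    himp_inf_le

theorem or_elim (hAB : Entails v Γ (.or A B)) (hA : Entails v Δ C) (hB : Entails v Θ C) :
    Entails v (Γ ∪ Δ \ {A} ∪ Θ \ {B}) C := by
  intro a h
  have hle : a ≤ A.eval v ⊔ B.eval v := hAB a fun X hX => h X (.inl (.inl hX))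
  have hAC : a ≤ A.eval v ⇨ C.eval v := hA.imp_intro a fun X hX => h X (.inl (.inr hX))
  have hBC : a ≤ B.eval v ⇨ C.eval v := hB.imp_intro a fun X hX => h X (.inr hX)
  calc
    a ≤ ((A.eval v ⇨ C.eval v) ⊓ (B.eval v ⇨ C.eval v)) ⊓ (A.eval v ⊔ B.eval v) :=
      le_inf (le_inf hAC hBC) hle
    _ = (A.eval v ⊔ B.eval v ⇨ C.eval v) ⊓ (A.eval v ⊔ B.eval v) := by rw [sup_himp_distrib]
    _ ≤ C.eval v := himp_inf_le

theorem falsum_elim (h : Entails v Γ .falsum) : Entails v Γ C :=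
  fun a ha => (h a ha).trans bot_le

theorem eval_eq_top (h : Entails v ∅ C) : C.eval v = ⊤ :=
  top_le_iff.1 (h ⊤ fun _ hX => hX.elim)

end Entails

theorem Ded.entails {C : Formula} (v : ℕ → α) (d : Ded C) : Entails v (hyps d) C := by
  induction d with
  | ass A => exact .singleton_self
  | andI _ _ _ hA hB hC => exact (hA.and_intro hB).cut hC
  | impI A _ _ hB hC => exact hB.imp_intro.cut hC
  | orI₁ B _ _ hA hC => exact hA.or_inl.cut hC
  | orI₂ A _ _ hB hC => exact hB.or_inr.cut hC
  | andE _ _ hAB hC =>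
    refine .cut_set ?_ hC
    rintro _ (rfl | rfl)
    · exact hAB.and_left
    · exact hAB.and_right
  | impE _ _ _ hAB hA hC => exact (hAB.imp_elim hA).cut hC
  | orE _ _ _ hAB hA hB => exact hAB.or_elim hA hB
  | falsumE _ h => exact h.falsum_elim

end HeytingSemantics

/-- **Consistency of I**: there is no proof of `⊥` in I, i.e. there is no
deduction of `⊥` with no undischarged assumptions. -/
theorem consistency : ¬ ∃ d : Ded Formula.falsum, hyps d = ∅ := by
  rintro ⟨d, hd⟩
  have h : Entails (fun _ => true) ∅ .falsum := hd ▸ d.entails (fun _ => true)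
  exact bot_ne_top h.eval_eq_top
end
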